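/- Let K₃,₃⁺ be the graph obtained from the complete bipartite graph K₃,₃ by subdividing one edge once (equivalently, the graph obtained from the 5-cycle by replacing its vertices by independent sets of orders 1, 1, 1, 2, 2 in cyclic order). Then K₃,₃⁺ is connected, has maximum degree 3, n(K₃,₃⁺) = 7, and ν_s(K₃,₃⁺) = 1; in particular ν_s(K₃,₃⁺) < n(K₃,₃⁺)/((⌈3/2⌉+1)(⌊3/2⌋+1)) = 7/6, so the bound ν_s(G) ≥ n(G)/((⌈Δ/2⌉+1)(⌊Δ/2⌋+1)) fails for K₃,₃⁺. -/

import Mathlib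

/-- A finset `M` of edges is an *induced matching* of `G` if every element of `M` is an
edge of `G`, no two distinct edges of `M` share an endvertex, and no edge of `G` joins
an endvertex of one edge of `M` to an endvertex of another edge of `M`. -/
def IsInducedMatching {V : Type*} (G : SimpleGraph V) (M : Finset (Sym2 V)) : Prop :=
  (M : Set (Sym2 V)) ⊆ G.edgeSet ∧
    ∀ e ∈ M, ∀ f ∈ M, e ≠ f → ∀ x ∈ e, ∀ y ∈ f, x ≠ y ∧ ¬ G.Adj x y

/-- The induced (strong) matching number `ν_s(G)`: the maximum size of an induced matching. -/
noncomputable def indMatchNum {V : Type*} (G : SimpleGraph V) : ℕ :=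
  sSup {n : ℕ | ∃ M : Finset (Sym2 V), IsInducedMatching G M ∧ M.card = n}

/-- Base relation for `K₃,₃⁺`, the graph obtained from `K₃,₃` with parts
`{a₀,a₁,a₂}` (the left `Fin 3`) and `{b₀,b₁,b₂}` (the right `Fin 3`) by subdividing the
edge `a₀b₀` once with the new vertex `w` (the `Unit` summand): all edges `aᵢbⱼ` are kept
except `a₀b₀`, and `w` is adjacent exactly to `a₀` and `b₀`. -/
def K33plusRel : (Fin 3 ⊕ Fin 3 ⊕ Unit) → (Fin 3 ⊕ Fin 3 ⊕ Unit) → Bool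
  | Sum.inl i, Sum.inr (Sum.inl j) => !(decide (i = 0) && decide (j = 0))
  | Sum.inl i, Sum.inr (Sum.inr _) => decide (i = 0)
  | Sum.inr (Sum.inl j), Sum.inr (Sum.inr _) => decide (j = 0)
  | _, _ => false

/-- `K₃,₃⁺`: the complete bipartite graph `K₃,₃` with one edge subdivided once. -/
def K33plus : SimpleGraph (Fin 3 ⊕ Fin 3 ⊕ Unit) :=
  SimpleGraph.fromRel (fun a b => K33plusRel a b = true)

instance : DecidableRel K33plus.Adj := fun a b =>
  inferInstanceAs (Decidable (a ≠ b ∧ (K33plusRel a b = true ∨ K33plusRel b a = true)))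

/-!
An induced matching cannot tell twins apart: if `G` is obtained from `H` by replacing vertices with
nonempty independent sets, that is, `G = H.comap f` with `f` surjective, then both `f` and any
section of `f` carry induced matchings to induced matchings of the same size, so `ν_s(G) = ν_s(H)`.
If `H` is connected with at least two vertices, then twins have a common neighbour, so `G` is
connected too. The graph `K₃,₃⁺` arises in this way from the 5-cycle, in which an edge together with
the neighbours of its two ends misses only one vertex, so no second edge can be far away.
-/

section Comap

variable {V W : Type*} {H : SimpleGraph W} {f : V → W} {M : Finset (Sym2 V)}

lemma IsInducedMatching.eq_of_apply_eq (hM : IsInducedMatching (H.comap f) M) {e e' : Sym2 V}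
    (he : e ∈ M) (he' : e' ∈ M) {x y : V} (hx : x ∈ e) (hy : y ∈ e') (hxy : f x = f y) :
    e = e' := by
  by_contra hne
  obtain ⟨z, rfl⟩ := hy
  have hyz : H.Adj (f y) (f z) := hM.1 he'
  have hxz : (H.comap f).Adj x z := by rwa [SimpleGraph.comap_adj, hxy]
  exact (hM.2 e he s(y, z) he' hne x hx z (Sym2.mem_mk_right y z)).2 hxz

lemma IsInducedMatching.injOn_map (hM : IsInducedMatching (H.comap f) M) :
    Set.InjOn (Sym2.map f) M := by
  intro e he e' he' hmap
  obtain ⟨x, hx⟩ : ∃ x, x ∈ e := ⟨_, Sym2.out_fst_mem e⟩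
  obtain ⟨y, hy, hyx⟩ := Sym2.mem_map.1 (hmap ▸ Sym2.mem_map.2 ⟨x, hx, rfl⟩)
  exact hM.eq_of_apply_eq he he' hx hy hyx.symm

lemma IsInducedMatching.image_map [DecidableEq W] (hM : IsInducedMatching (H.comap f) M) :
    IsInducedMatching H (M.image (Sym2.map f)) := by
  refine ⟨?_, ?_⟩
  · rw [Finset.coe_image, Set.image_subset_iff]
    exact fun e he => (SimpleGraph.Hom.comap f H).map_mem_edgeSet (hM.1 he)
  · simp only [Finset.forall_mem_image, Sym2.mem_map]
    rintro e he e' he' hne _ ⟨x, hx, rfl⟩ _ ⟨y, hy, rfl⟩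
    have hee' : e ≠ e' := fun h => hne (congrArg _ h)
    exact ⟨fun hxy => hee' (hM.eq_of_apply_eq he he' hx hy hxy),
      (hM.2 e he e' he' hee' x hx y hy).2⟩

lemma IsInducedMatching.exists_card_eq_of_comap (hM : IsInducedMatching (H.comap f) M) :
    ∃ N, IsInducedMatching H N ∧ N.card = M.card := by
  classical
  exact ⟨M.image (Sym2.map f), hM.image_map, Finset.card_image_of_injOn hM.injOn_map⟩

lemma indMatchNum_comap_of_surjective (H : SimpleGraph W) (hf : f.Surjective) :
    indMatchNum (H.comap f) = indMatchNum H := by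
  obtain ⟨g, hg⟩ := hf.hasRightInverse
  have hsection : (H.comap f).comap g = H := by
    rw [SimpleGraph.comap_comap, hg.comp_eq_id, SimpleGraph.comap_id]
  refine congrArg sSup (Set.ext fun n => ⟨?_, ?_⟩)
  · rintro ⟨M, hM, rfl⟩
    exact hM.exists_card_eq_of_comap
  · rintro ⟨M, hM, rfl⟩
    rw [← hsection] at hM
    exact hM.exists_card_eq_of_comap

lemma connected_comap_of_surjective [Nontrivial W] (hH : H.Connected) (hf : f.Surjective) :
    (H.comap f).Connected := by
  obtain ⟨g, hg⟩ := hf.hasRightInverse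
  have reachable_of_apply_eq {x y : V} (hxy : f x = f y) : (H.comap f).Reachable x y := by
    obtain ⟨w, hw⟩ := hH.preconnected.exists_adj_of_nontrivial (f x)
    obtain ⟨z, rfl⟩ := hf w
    have hxz : (H.comap f).Adj x z := hw
    have hyz : (H.comap f).Adj y z := by rwa [SimpleGraph.comap_adj, ← hxy]
    exact hxz.reachable.trans hyz.symm.reachable
  let sectionHom : H →g H.comap f := ⟨g, fun h => by simpa [hg _] using h⟩
  have : Nonempty V := hH.nonempty.map g
  refine ⟨fun x y => ?_⟩
  have hx : (H.comap f).Reachable x (g (f x)) := reachable_of_apply_eq (hg (f x)).symm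
  have hy : (H.comap f).Reachable (g (f y)) y := reachable_of_apply_eq (hg (f y))
  exact (hx.trans ((hH.preconnected (f x) (f y)).map sectionHom)).trans hy

end Comap

section EdgesNear

variable {V : Type*} {G : SimpleGraph V}

lemma isInducedMatching_singleton {e : Sym2 V} (he : e ∈ G.edgeSet) : IsInducedMatching G {e} := by
  refine ⟨by simpa using he, fun e₁ h₁ e₂ h₂ hne => ?_⟩
  rw [Finset.mem_singleton] at h₁ h₂
  exact absurd (h₁.trans h₂.symm) hne

lemma IsInducedMatching.card_le_one_of_forall_edges_near {M : Finset (Sym2 V)}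
    (hM : IsInducedMatching G M)
    (hG : ∀ e ∈ G.edgeSet, ∀ e' ∈ G.edgeSet, ∃ x ∈ e, ∃ y ∈ e', x = y ∨ G.Adj x y) :
    M.card ≤ 1 := by
  refine Finset.card_le_one.2 fun e he e' he' => by_contra fun hne => ?_
  obtain ⟨x, hx, y, hy, hxy⟩ := hG e (hM.1 he) e' (hM.1 he')
  obtain ⟨hxy_ne, hxy_not_adj⟩ := hM.2 e he e' he' hne x hx y hy
  exact hxy.elim hxy_ne hxy_not_adj

lemma indMatchNum_eq_one_of_forall_edges_near (hne : G.edgeSet.Nonempty)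
    (hG : ∀ e ∈ G.edgeSet, ∀ e' ∈ G.edgeSet, ∃ x ∈ e, ∃ y ∈ e', x = y ∨ G.Adj x y) :
    indMatchNum G = 1 := by
  obtain ⟨e, he⟩ := hne
  refine IsGreatest.csSup_eq ⟨⟨{e}, isInducedMatching_singleton he, Finset.card_singleton e⟩, ?_⟩
  rintro n ⟨M, hM, rfl⟩
  exact hM.card_le_one_of_forall_edges_near hG

end EdgesNear

section CycleGraphFive

lemma exists_forall_ne_near_of_mem_edgeSet_cycleGraph_five :
    ∀ e ∈ (SimpleGraph.cycleGraph 5).edgeSet,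
      ∃ m, ∀ y ≠ m, ∃ x ∈ e, x = y ∨ (SimpleGraph.cycleGraph 5).Adj x y := by
  decide

lemma exists_near_of_mem_edgeSet_cycleGraph_five {e e' : Sym2 (Fin 5)}
    (he : e ∈ (SimpleGraph.cycleGraph 5).edgeSet) (he' : e' ∈ (SimpleGraph.cycleGraph 5).edgeSet) :
    ∃ x ∈ e, ∃ y ∈ e', x = y ∨ (SimpleGraph.cycleGraph 5).Adj x y := by
  obtain ⟨m, hm⟩ := exists_forall_ne_near_of_mem_edgeSet_cycleGraph_five e he
  obtain ⟨y, hy, hym⟩ : ∃ y ∈ e', y ≠ m := by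
    induction e' with | _ c d
    have hcd : c ≠ d := SimpleGraph.Adj.ne ((SimpleGraph.mem_edgeSet _).1 he')
    by_cases hc : c = m
    · exact ⟨d, Sym2.mem_mk_right c d, hc ▸ hcd.symm⟩
    · exact ⟨c, Sym2.mem_mk_left c d, hc⟩
  obtain ⟨x, hx, hxy⟩ := hm y hym
  exact ⟨x, hx, y, hy, hxy⟩

lemma indMatchNum_cycleGraph_five : indMatchNum (SimpleGraph.cycleGraph 5) = 1 :=
  indMatchNum_eq_one_of_forall_edges_near ⟨s(0, 1), by decide⟩ fun _ he _ he' =>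
    exists_near_of_mem_edgeSet_cycleGraph_five he he'

end CycleGraphFive

namespace K33plus

/-- The blow-up map `K₃,₃⁺ → C₅`, whose fibres, listed along the cycle, are the independent sets
`{a₀}`, `{w}`, `{b₀}`, `{a₁, a₂}`, `{b₁, b₂}`. -/
def toCycle : Fin 3 ⊕ Fin 3 ⊕ Unit → Fin 5
  | Sum.inl i => if i = 0 then 0 else 3
  | Sum.inr (Sum.inl j) => if j = 0 then 2 else 4
  | Sum.inr (Sum.inr _) => 1

lemma toCycle_surjective : toCycle.Surjective := by
  decide

lemma eq_comap_toCycle : K33plus = (SimpleGraph.cycleGraph 5).comap toCycle := by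
  have hadj : ∀ x y, K33plus.Adj x y ↔ (SimpleGraph.cycleGraph 5).Adj (toCycle x) (toCycle y) := by
    decide
  ext x y
  exact hadj x y

lemma connected : K33plus.Connected := by
  rw [eq_comap_toCycle]
  exact connected_comap_of_surjective SimpleGraph.cycleGraph_connected toCycle_surjective

lemma maxDegree_eq_three : K33plus.maxDegree = 3 := by
  decide

lemma indMatchNum_eq_one : indMatchNum K33plus = 1 := by
  rw [eq_comap_toCycle, indMatchNum_comap_of_surjective _ toCycle_surjective,
    indMatchNum_cycleGraph_five]

end K33plus

/-- `K₃,₃⁺` is connected, has maximum degree `3`, `7` vertices, and induced matching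
number `1`; in particular `ν_s(K₃,₃⁺) < n(K₃,₃⁺)/((⌈3/2⌉+1)(⌊3/2⌋+1)) = 7/6`, so the
bound `ν_s(G) ≥ n(G)/((⌈Δ/2⌉+1)(⌊Δ/2⌋+1))` fails for `K₃,₃⁺`. -/
theorem K33plus_counterexample :
    K33plus.Connected ∧
    K33plus.maxDegree = 3 ∧
    Fintype.card (Fin 3 ⊕ Fin 3 ⊕ Unit) = 7 ∧
    indMatchNum K33plus = 1 ∧
    (indMatchNum K33plus : ℚ) <
      (Fintype.card (Fin 3 ⊕ Fin 3 ⊕ Unit) : ℚ) /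
        (((⌈(3 : ℚ) / 2⌉ : ℚ) + 1) * ((⌊(3 : ℚ) / 2⌋ : ℚ) + 1)) := by
  refine ⟨K33plus.connected, K33plus.maxDegree_eq_three, by decide, K33plus.indMatchNum_eq_one, ?_⟩
  have hceil : ⌈(3 : ℚ) / 2⌉ = 2 := by norm_num
  have hfloor : ⌊(3 : ℚ) / 2⌋ = 1 := by norm_num
  have hcard : Fintype.card (Fin 3 ⊕ Fin 3 ⊕ Unit) = 7 := by decide
  rw [K33plus.indMatchNum_eq_one, hcard, hceil, hfloor]
  norm_num
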